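/- Fix a prime power q. There exists a constant C > 0 such that for every integer n ≥ 3 and every finite set {p_1, …, p_m} of distinct monic irreducible polynomials over F_q with Σ_{i=1}^m deg p_i ≤ n, one has Π_{i=1}^m τ(q^{deg p_i} − 1) ≤ exp(C·n / log log n), where τ(m) is the number of positive divisors of m. -/

import Mathlib

open Polynomial

/-!
The proof combines a uniform form of the classical divisor bound with a count of irreducible
polynomials.

For every threshold `T ≥ 2`, splitting the prime factors of `k` at `T` gives
`log τ(k) ≤ log k / log T + 4 T √(log k)` (`log_card_divisors_le`): a prime `r ≥ T` with exponent
`a` contributes `log (a + 1) ≤ a ≤ a log r / log T`, while each of the at most `T` smaller primes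
contributes at most `log (1 + log k / log 2) ≤ 4 √(log k)`.

Take `k = q ^ d - 1` for `d` ranging over the degrees of the elements of `s`, with one `T` for all
of them. The first terms add up to at most `n log q / log T`. For the second, Cauchy–Schwarz gives
`∑ √d ≤ √(|s| n)`, and `|s| = O(n / log n)` (`card_mul_log_le`), since there are at most `q ^ D`
polynomials of degree `< D` and at most `n / D` elements of `s` of degree `≥ D`, where
`D ≈ log n / (2 log q)`. With `T ≈ (log n) ^ (1/4)` both parts are `O(n / log log n)`.
-/

lemma log_one_add_le_two_sqrt {y : ℝ} (hy : 0 ≤ y) : Real.log (1 + y) ≤ 2 * √y := by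
  have hs := Real.sqrt_nonneg y
  have h1 : 1 + y ≤ (1 + √y) ^ 2 := by nlinarith [Real.sq_sqrt hy]
  have h2 := Real.log_le_log (by linarith) h1
  rw [Real.log_pow] at h2
  have h3 := Real.log_le_sub_one_of_pos (show 0 < 1 + √y by linarith)
  push_cast at h2
  linarith

lemma sum_factorization_mul_log {k : ℕ} (hk : k ≠ 0) :
    ∑ r ∈ k.primeFactors, (k.factorization r : ℝ) * Real.log r = Real.log k := by
  conv_rhs => rw [← Nat.prod_factorization_pow_eq_self hk]
  rw [Finsupp.prod, Nat.support_factorization]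
  push_cast
  rw [Real.log_prod]
  · simp [Real.log_pow]
  · intro r hr
    have := (Nat.prime_of_mem_primeFactors hr).pos
    positivity

/-- The divisor bound with a free threshold `T`, which separates the small prime factors of `k`
from the large ones. -/
lemma log_card_divisors_le {k : ℕ} (hk : k ≠ 0) {T : ℕ} (hT : 2 ≤ T) :
    Real.log (k.divisors.card : ℝ) ≤
      Real.log k / Real.log T + 4 * T * √(Real.log k) := by
  have hT' : 0 < Real.log T := Real.log_pos (by exact_mod_cast hT)
  have hlk : 0 ≤ Real.log k := Real.log_natCast_nonneg k
  have hl2 : (1 / 4 : ℝ) < Real.log 2 := by linarith [Real.log_two_gt_d9]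
  have key : ∀ r ∈ k.primeFactors, Real.log ((k.factorization r : ℝ) + 1) ≤
      (k.factorization r : ℝ) * Real.log r / Real.log T +
        if r < T then 4 * √(Real.log k) else 0 := by
    intro r hr
    have hrp := Nat.prime_of_mem_primeFactors hr
    have hr2 : Real.log 2 ≤ Real.log r :=
      Real.log_le_log (by norm_num) (by exact_mod_cast hrp.two_le)
    have ha : (0 : ℝ) ≤ k.factorization r := Nat.cast_nonneg _
    split_ifs with h
    · have h1 : (k.factorization r : ℝ) * Real.log r ≤ Real.log k := by
        rw [← sum_factorization_mul_log hk]
        exact Finset.single_le_sum (f := fun r => (k.factorization r : ℝ) * Real.log r)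
          (fun i _ => mul_nonneg (Nat.cast_nonneg _) (Real.log_natCast_nonneg i)) hr
      have h2 : (k.factorization r : ℝ) ≤ 4 * Real.log k := by nlinarith
      have h3 := log_one_add_le_two_sqrt ha
      have h4 : √(k.factorization r : ℝ) ≤ 2 * √(Real.log k) := by
        calc √(k.factorization r : ℝ) ≤ √(2 ^ 2 * Real.log k) :=
              Real.sqrt_le_sqrt (by linarith)
          _ = 2 * √(Real.log k) := by
              rw [Real.sqrt_mul (by norm_num), Real.sqrt_sq (by norm_num)]
      have h5 : 0 ≤ (k.factorization r : ℝ) * Real.log r / Real.log T := by positivity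
      rw [add_comm (_ : ℝ) 1]
      linarith
    · have h1 : Real.log T ≤ Real.log r :=
        Real.log_le_log (by positivity) (by exact_mod_cast not_lt.mp h)
      have h2 := Real.log_le_sub_one_of_pos (show 0 < (k.factorization r : ℝ) + 1 by linarith)
      have h3 : (k.factorization r : ℝ) ≤ (k.factorization r : ℝ) * Real.log r / Real.log T := by
        rw [le_div_iff₀ hT']
        exact mul_le_mul_of_nonneg_left h1 ha
      linarith
  rw [Nat.card_divisors hk]
  push_cast
  rw [Real.log_prod (fun r _ => by positivity)]
  refine (Finset.sum_le_sum key).trans ?_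
  rw [Finset.sum_add_distrib, ← Finset.sum_div, sum_factorization_mul_log hk, ← Finset.sum_filter,
    Finset.sum_const, nsmul_eq_mul]
  have hcard : (k.primeFactors.filter (· < T)).card ≤ T := by
    calc _ ≤ (Finset.range T).card := Finset.card_le_card (by intro r; simp)
      _ = T := Finset.card_range T
  have hcard' : ((k.primeFactors.filter (· < T)).card : ℝ) ≤ T := by exact_mod_cast hcard
  have := mul_le_mul_of_nonneg_right hcard' (show 0 ≤ 4 * √(Real.log k) by positivity)
  linarith

lemma card_natDegree_lt_le {F : Type*} [Field F] [Fintype F] (s : Finset F[X]) (D : ℕ)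
    (hs : ∀ p ∈ s, p.natDegree < D) : s.card ≤ Fintype.card F ^ D := by
  classical
  have h : s.card ≤ (Finset.univ : Finset (Fin D → F)).card := by
    refine Finset.card_le_card_of_injOn (fun p i => p.coeff i) (fun _ _ => by simp) ?_
    intro p hp r hr h
    ext i
    by_cases hi : i < D
    · exact congrFun h ⟨i, hi⟩
    · rw [coeff_eq_zero_of_natDegree_lt ((hs p hp).trans_le (not_lt.mp hi)),
        coeff_eq_zero_of_natDegree_lt ((hs r hr).trans_le (not_lt.mp hi))]
  simpa using h

/-- A set of polynomials of total degree at most `n` has `O(n / log n)` elements. -/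
lemma card_mul_log_le {F : Type*} [Field F] [Fintype F] {n : ℕ} (hn : 3 ≤ n) (s : Finset F[X])
    (hsum : (∑ p ∈ s, p.natDegree) ≤ n) :
    (s.card : ℝ) * Real.log n ≤
      (2 * Fintype.card F + 2 * Real.log (Fintype.card F)) * n := by
  classical
  have hq : (1 : ℝ) < Fintype.card F := by exact_mod_cast Fintype.one_lt_card
  set q : ℝ := ((Fintype.card F : ℕ) : ℝ) with hqdef
  have hQ : 0 < Real.log q := Real.log_pos hq
  have hn0 : (0 : ℝ) < n := by positivity
  have hL : 0 < Real.log n := Real.log_pos (by exact_mod_cast (by omega : 1 < n))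
  set D : ℕ := ⌊Real.log n / (2 * Real.log q)⌋₊ + 1 with hD
  have hD1 : Real.log n ≤ 2 * Real.log q * D := by
    have := (Nat.lt_floor_add_one (Real.log n / (2 * Real.log q))).le
    rw [div_le_iff₀ (by positivity)] at this
    rw [hD]; push_cast; linarith
  have hD2 : q ^ D ≤ q * √n := by
    rw [hD, pow_succ, mul_comm]
    refine mul_le_mul_of_nonneg_left ?_ (by linarith)
    have h1 : (⌊Real.log n / (2 * Real.log q)⌋₊ : ℝ) ≤ _ := Nat.floor_le (by positivity)
    rw [le_div_iff₀ (by positivity)] at h1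
    rw [← Real.log_le_log_iff (by positivity) (by positivity), Real.log_pow,
      Real.log_sqrt hn0.le]
    linarith
  have hsplit := Finset.card_filter_add_card_filter_not (s := s) (fun p => p.natDegree < D)
  have hlow : ((s.filter (fun p => p.natDegree < D)).card : ℝ) ≤ q ^ D := by
    have := card_natDegree_lt_le (s.filter (fun p => p.natDegree < D)) D
      (fun p hp => (Finset.mem_filter.mp hp).2)
    rw [hqdef]; exact_mod_cast this
  have hhigh : ((s.filter (fun p => ¬ p.natDegree < D)).card : ℝ) * D ≤ n := by
    have h1 : (s.filter (fun p => ¬ p.natDegree < D)).card * D ≤ n := by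
      calc _ = (s.filter (fun p => ¬ p.natDegree < D)).card • D := by simp
        _ ≤ ∑ p ∈ s.filter (fun p => ¬ p.natDegree < D), p.natDegree :=
            Finset.card_nsmul_le_sum _ _ _
              (fun p hp => not_lt.mp (Finset.mem_filter.mp hp).2)
        _ ≤ ∑ p ∈ s, p.natDegree :=
            Finset.sum_le_sum_of_subset (Finset.filter_subset _ _)
        _ ≤ n := hsum
    exact_mod_cast h1
  have hcard : (s.card : ℝ) = (s.filter (fun p => p.natDegree < D)).card +
      (s.filter (fun p => ¬ p.natDegree < D)).card := by exact_mod_cast hsplit.symm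
  set A : ℝ := ((s.filter (fun p => p.natDegree < D)).card : ℝ)
  set B : ℝ := ((s.filter (fun p => ¬ p.natDegree < D)).card : ℝ)
  have hB : 0 ≤ B := Nat.cast_nonneg _
  have hlogn : Real.log n ≤ 2 * √n := by
    have h1 := Real.log_le_sub_one_of_pos (show 0 < √(n : ℝ) by positivity)
    rw [Real.log_sqrt hn0.le] at h1
    linarith
  have e1 : A * Real.log n ≤ 2 * q * n := by
    calc A * Real.log n ≤ (q * √n) * (2 * √n) :=
          mul_le_mul (hlow.trans hD2) hlogn hL.le (by positivity)
      _ = 2 * q * (√n * √n) := by ring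
      _ = 2 * q * n := by rw [Real.mul_self_sqrt hn0.le]
  have e2 : B * Real.log n ≤ 2 * Real.log q * n := by
    calc B * Real.log n ≤ B * (2 * Real.log q * D) := mul_le_mul_of_nonneg_left hD1 hB
      _ = 2 * Real.log q * (B * D) := by ring
      _ ≤ _ := mul_le_mul_of_nonneg_left hhigh (by positivity)
  rw [hcard]
  linarith

/-- For any set of distinct monic irreducible polynomials `p₁, …, p_m` over `F_q` with
`∑ deg pᵢ ≤ n`, one has `∏ τ(q^{deg pᵢ} - 1) ≤ exp(C n / log log n)`. -/
theorem stmt18 (F : Type*) [Field F] [Fintype F] :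
    ∃ C : ℝ, 0 < C ∧ ∀ n : ℕ, 3 ≤ n → ∀ s : Finset F[X],
      (∀ p ∈ s, p.Monic ∧ Irreducible p) →
      (∑ p ∈ s, p.natDegree) ≤ n →
      (∏ p ∈ s, ((Fintype.card F ^ p.natDegree - 1).divisors.card : ℝ)) ≤
        Real.exp (C * n / Real.log (Real.log n)) := by
  have hq1 : 1 < Fintype.card F := Fintype.one_lt_card
  have hq : (1 : ℝ) < Fintype.card F := by exact_mod_cast hq1
  have hQ : 0 < Real.log (Fintype.card F) := Real.log_pos hq
  set Q : ℝ := Real.log (Fintype.card F) with hQdef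
  set K : ℝ := 2 * Fintype.card F + 2 * Q with hK
  have hK0 : 0 < K := by positivity
  refine ⟨4 * (Q + 8 * (√Q * √K)), by positivity, ?_⟩
  intro n hn s hs hsum
  have hn0 : (0 : ℝ) < n := by positivity
  have hL : 1 < Real.log n := by
    rw [Real.lt_log_iff_exp_lt hn0]
    have : (3 : ℝ) ≤ n := by exact_mod_cast hn
    linarith [Real.exp_one_lt_d9]
  obtain ⟨u, hu1, hu4⟩ : ∃ u : ℝ, 1 < u ∧ Real.log n = u ^ 4 := by
    refine ⟨√√(Real.log n), ?_, ?_⟩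
    · rw [Real.lt_sqrt (by norm_num), Real.lt_sqrt (by norm_num)]
      simpa using hL
    · rw [show √√(Real.log n) ^ 4 = (√√(Real.log n) ^ 2) ^ 2 by ring,
        Real.sq_sqrt (by positivity), Real.sq_sqrt (by linarith)]
  have hlu : 0 < Real.log u := Real.log_pos hu1
  have hluu : Real.log u ≤ u := by
    linarith [Real.log_le_sub_one_of_pos (show 0 < u by linarith)]
  set T : ℕ := ⌈u⌉₊ with hT
  have hTu : u ≤ T := Nat.le_ceil u
  have hT2 : 2 ≤ T := by
    have : (1 : ℝ) < T := hu1.trans_le hTu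
    have : 1 < T := by exact_mod_cast this
    omega
  have hT2u : (T : ℝ) ≤ 2 * u := by
    linarith [Nat.ceil_lt_add_one (show 0 ≤ u by linarith)]
  have hlT : Real.log u ≤ Real.log T := Real.log_le_log (by linarith) hTu
  have hne : ∀ p ∈ s, Fintype.card F ^ p.natDegree - 1 ≠ 0 := by
    intro p hp
    have := Nat.one_lt_pow (hs p hp).2.natDegree_pos.ne' hq1
    omega
  have hterm : ∀ p ∈ s,
      Real.log ((Fintype.card F ^ p.natDegree - 1).divisors.card : ℝ) ≤
        Q / Real.log u * p.natDegree + 8 * u * √Q * √(p.natDegree : ℝ) := by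
    intro p hp
    have hk : Real.log ((Fintype.card F ^ p.natDegree - 1 : ℕ) : ℝ) ≤ p.natDegree * Q := by
      rw [hQdef, ← Real.log_pow]
      refine Real.log_le_log (by exact_mod_cast Nat.pos_of_ne_zero (hne p hp)) ?_
      exact_mod_cast Nat.sub_le _ _
    have h1 := log_card_divisors_le (hne p hp) hT2
    have h2 : Real.log ((Fintype.card F ^ p.natDegree - 1 : ℕ) : ℝ) / Real.log T ≤
        p.natDegree * Q / Real.log u := div_le_div₀ (by positivity) hk hlu hlT
    have h3 : 4 * T * √(Real.log ((Fintype.card F ^ p.natDegree - 1 : ℕ) : ℝ)) ≤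
        4 * (2 * u) * (√(p.natDegree : ℝ) * √Q) := by
      rw [← Real.sqrt_mul (Nat.cast_nonneg _)]
      gcongr
    calc _ ≤ _ := h1.trans (add_le_add h2 h3)
      _ = _ := by ring
  have hsumR : (∑ p ∈ s, (p.natDegree : ℝ)) ≤ n := by exact_mod_cast hsum
  have hsqrt : ∑ p ∈ s, √(p.natDegree : ℝ) ≤ √K * n / u ^ 2 := by
    have hcs : (∑ p ∈ s, √(p.natDegree : ℝ)) ^ 2 ≤ s.card * n := by
      refine (sq_sum_le_card_mul_sum_sq (s := s)).trans ?_
      refine mul_le_mul_of_nonneg_left ?_ (Nat.cast_nonneg _)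
      simpa using hsumR
    have hc := card_mul_log_le hn s hsum
    rw [hu4] at hc
    refine le_of_abs_le (abs_le_of_sq_le_sq ?_ (by positivity))
    refine hcs.trans ?_
    rw [div_pow, mul_pow, Real.sq_sqrt hK0.le, le_div_iff₀ (by positivity)]
    nlinarith [mul_le_mul_of_nonneg_right hc hn0.le]
  have hpos : ∀ p ∈ s, (0 : ℝ) < ((Fintype.card F ^ p.natDegree - 1).divisors.card : ℝ) := by
    intro p hp
    exact_mod_cast Finset.card_pos.mpr (Nat.nonempty_divisors.mpr (hne p hp))
  rw [← Real.log_le_iff_le_exp (Finset.prod_pos hpos), Real.log_prod (fun p hp => (hpos p hp).ne')]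
  refine (Finset.sum_le_sum hterm).trans ?_
  rw [Finset.sum_add_distrib, ← Finset.mul_sum, ← Finset.mul_sum]
  have hu0 : 0 < u := by linarith
  calc _ ≤ Q / Real.log u * n + 8 * u * √Q * (√K * n / u ^ 2) := by gcongr
    _ = Q * n / Real.log u + 8 * (√Q * √K) * n / u := by field_simp
    _ ≤ Q * n / Real.log u + 8 * (√Q * √K) * n / Real.log u := by gcongr
    _ = _ := by rw [hu4, Real.log_pow]; push_cast; field_simp
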